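/- (Poincaré-type inequality on a thin overlap region, Proposition 1 of the paper.) There exists a constant c > 0, independent of φ, ζ, x_M, d_o and h, such that for every x_M > 0, every h > 0, every d_o with 0 < d_o ≤ h, every continuous ζ: [0, x_M] → ℝ with 0 < ζ(x) ≤ d_o, and every function φ that is C¹ on a neighborhood of the closure of Ω_o, one has ∫_{Ω_o} φ(x,y)² d(x,y) ≤ c · d_o · h · ( ∫_{Ω_o} |∇φ(x,y)|² d(x,y) + (1/h) ∫_0^{x_M} φ(x,ζ(x))² dx ). -/

import Mathlib

/-!
The inequality is one-dimensional: on a vertical segment `(a, b)`, integrating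
`((y - a) φ²)' = φ² + 2 (y - a) φ φ' ≥ φ² / 2 - 2 (b - a)² φ'²`
bounds `∫ φ²` by `4 (b - a)² ∫ φ'² + 2 (b - a) φ(b)²`. On the vertical segments of the region
`b - a ≤ d_o ≤ h`, so integrating over `x` and discarding the horizontal derivative gives `c = 4`.
-/

open MeasureTheory Set

/-- Partial derivative of `φ : ℝ × ℝ → ℝ` with respect to the first variable. -/
noncomputable def pdx (φ : ℝ × ℝ → ℝ) (p : ℝ × ℝ) : ℝ :=
  deriv (fun t => φ (t, p.2)) p.1

/-- Partial derivative of `φ : ℝ × ℝ → ℝ` with respect to the second variable. -/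
noncomputable def pdy (φ : ℝ × ℝ → ℝ) (p : ℝ × ℝ) : ℝ :=
  deriv (fun t => φ (p.1, t)) p.2

/-- Squared Euclidean norm of the gradient of `φ : ℝ × ℝ → ℝ`. -/
noncomputable def gradSq (φ : ℝ × ℝ → ℝ) (p : ℝ × ℝ) : ℝ :=
  (pdx φ p) ^ 2 + (pdy φ p) ^ 2

/-- The two-dimensional overlap region under the graph of `ζ`. -/
def ovl (xM : ℝ) (ζ : ℝ → ℝ) : Set (ℝ × ℝ) :=
  {p : ℝ × ℝ | 0 < p.1 ∧ p.1 < xM ∧ 0 < p.2 ∧ p.2 < ζ p.1}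

section Segment

variable {F : Type*} [NormedAddCommGroup F] [InnerProductSpace ℝ F]

lemma half_norm_sq_sub_le_norm_sq_add_inner (u v : F) {t r : ℝ} (htr : t ^ 2 ≤ r ^ 2) :
    1 / 2 * ‖u‖ ^ 2 - 2 * r ^ 2 * ‖v‖ ^ 2 ≤ ‖u‖ ^ 2 + t * (2 * inner ℝ u v) := by
  have hsq : 0 ≤ ‖u‖ ^ 2 + 2 * (2 * t * inner ℝ u v) + (2 * t) ^ 2 * ‖v‖ ^ 2 := by
    have h := norm_add_sq_real u ((2 * t) • v)
    rw [inner_smul_right, norm_smul, mul_pow, Real.norm_eq_abs, sq_abs] at h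
    exact h ▸ sq_nonneg _
  have htv : t ^ 2 * ‖v‖ ^ 2 ≤ r ^ 2 * ‖v‖ ^ 2 := by gcongr
  linarith

theorem setIntegral_norm_sq_Ioo_le {u u' : ℝ → F} {a b : ℝ} (hab : a ≤ b)
    (hu : ContinuousOn u (Icc a b))
    (hderiv : ∀ y ∈ Ioo a b, HasDerivWithinAt u (u' y) (Ioi y) y)
    (hu' : IntegrableOn (fun y => ‖u' y‖ ^ 2) (Ioo a b)) :
    ∫ y in Ioo a b, ‖u y‖ ^ 2 ≤
      4 * (b - a) ^ 2 * (∫ y in Ioo a b, ‖u' y‖ ^ 2) + 2 * (b - a) * ‖u b‖ ^ 2 := by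
  have hu_int : IntegrableOn (fun y => ‖u y‖ ^ 2) (Icc a b) :=
    (hu.norm.pow 2).integrableOn_Icc
  have hu'_int : IntegrableOn (fun y => ‖u' y‖ ^ 2) (Icc a b) :=
    (integrableOn_Icc_iff_integrableOn_Ioo).mpr hu'
  have hweighted : ∀ y ∈ Ioo a b, HasDerivWithinAt (fun y => (y - a) * ‖u y‖ ^ 2)
      (‖u y‖ ^ 2 + (y - a) * (2 * inner ℝ (u y) (u' y))) (Ioi y) y := fun y hy => by
    simpa only [id_eq, one_mul] using
      ((hasDerivWithinAt_id y _).sub_const a).fun_mul (hderiv y hy).norm_sq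
  -- This form of the fundamental theorem of calculus does not require `⟪u, u'⟫` to be integrable.
  have hftc := intervalIntegral.integral_le_sub_of_hasDeriv_right_of_le hab
    (by fun_prop) hweighted ((hu_int.const_mul (1 / 2)).sub (hu'_int.const_mul (2 * (b - a) ^ 2)))
    fun y hy => half_norm_sq_sub_le_norm_sq_add_inner (u y) (u' y)
      (pow_le_pow_left₀ (sub_nonneg.mpr hy.1.le) (sub_le_sub_right hy.2.le a) 2)
  simp only [Pi.sub_apply, sub_self, zero_mul, sub_zero] at hftc
  rw [intervalIntegral.integral_of_le hab, integral_Ioc_eq_integral_Ioo,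
    integral_sub ((hu_int.mono_set Ioo_subset_Icc_self).const_mul _) (hu'.const_mul _),
    integral_const_mul, integral_const_mul] at hftc
  linarith

end Segment

section RegionBetween

variable {α : Type*} {f g : α → ℝ} {s : Set α}

lemma mk_preimage_regionBetween {x : α} (hx : x ∈ s) :
    Prod.mk x ⁻¹' regionBetween f g s = Ioo (f x) (g x) := by
  ext y
  simp [regionBetween, hx]

lemma mk_mem_closure_regionBetween [TopologicalSpace α] {x : α} {y : ℝ} (hx : x ∈ s)
    (hfg : f x < g x) (hy : y ∈ Icc (f x) (g x)) : (x, y) ∈ closure (regionBetween f g s) := by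
  refine map_mem_closure (f := Prod.mk x) (by fun_prop) ((closure_Ioo hfg.ne).symm ▸ hy) ?_
  exact (mk_preimage_regionBetween hx).ge

lemma indicator_regionBetween_mk {E : Type*} [Zero E] {w : α × ℝ → E} {x : α} (hx : x ∈ s) :
    (fun y => (regionBetween f g s).indicator w (x, y)) =
      (Ioo (f x) (g x)).indicator fun y => w (x, y) := by
  rw [← mk_preimage_regionBetween hx]
  rfl

variable {E : Type*} [NormedAddCommGroup E] {w : α × ℝ → E}

lemma integral_indicator_regionBetween_mk [NormedSpace ℝ E] {x : α} (hx : x ∈ s) :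
    ∫ y, (regionBetween f g s).indicator w (x, y) = ∫ y in Ioo (f x) (g x), w (x, y) := by
  rw [indicator_regionBetween_mk hx, integral_indicator measurableSet_Ioo]

variable [MeasurableSpace α] {μ : Measure α}

lemma prod_volume_restrict_regionBetween [SFinite μ] :
    ((μ.restrict s).prod volume).restrict (regionBetween f g s) =
      (μ.prod volume).restrict (regionBetween f g s) := by
  rw [Measure.restrict_prod_eq_prod_univ,
    Measure.restrict_restrict_of_subset (regionBetween_subset f g s)]

lemma nullMeasurableSet_regionBetween_restrict (hs : MeasurableSet s)
    (hf : AEMeasurable f (μ.restrict s)) (hg : AEMeasurable g (μ.restrict s)) :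
    NullMeasurableSet (regionBetween f g s) ((μ.restrict s).prod volume) :=
  nullMeasurableSet_regionBetween _ hf hg hs.nullMeasurableSet

variable [SFinite μ]

lemma integrable_indicator_regionBetween (hs : MeasurableSet s)
    (hf : AEMeasurable f (μ.restrict s)) (hg : AEMeasurable g (μ.restrict s))
    (hw : IntegrableOn w (regionBetween f g s) (μ.prod volume)) :
    Integrable ((regionBetween f g s).indicator w) ((μ.restrict s).prod volume) := by
  rw [IntegrableOn, ← prod_volume_restrict_regionBetween] at hw
  exact IntegrableOn.integrable_indicator₀ hw (nullMeasurableSet_regionBetween_restrict hs hf hg)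

lemma ae_integrableOn_Ioo_of_regionBetween (hs : MeasurableSet s)
    (hf : AEMeasurable f (μ.restrict s)) (hg : AEMeasurable g (μ.restrict s))
    (hw : IntegrableOn w (regionBetween f g s) (μ.prod volume)) :
    ∀ᵐ x ∂μ.restrict s, IntegrableOn (fun y => w (x, y)) (Ioo (f x) (g x)) := by
  filter_upwards [(integrable_indicator_regionBetween hs hf hg hw).prod_right_ae,
    ae_restrict_mem hs] with x hx hxs
  rwa [indicator_regionBetween_mk hxs, integrable_indicator_iff measurableSet_Ioo] at hx

variable [NormedSpace ℝ E]

lemma integrableOn_setIntegral_Ioo_of_regionBetween (hs : MeasurableSet s)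
    (hf : AEMeasurable f (μ.restrict s)) (hg : AEMeasurable g (μ.restrict s))
    (hw : IntegrableOn w (regionBetween f g s) (μ.prod volume)) :
    IntegrableOn (fun x => ∫ y in Ioo (f x) (g x), w (x, y)) s μ :=
  IntegrableOn.congr_fun (integrable_indicator_regionBetween hs hf hg hw).integral_prod_left
    (fun _ => integral_indicator_regionBetween_mk) hs

theorem setIntegral_regionBetween (hs : MeasurableSet s)
    (hf : AEMeasurable f (μ.restrict s)) (hg : AEMeasurable g (μ.restrict s))
    (hw : IntegrableOn w (regionBetween f g s) (μ.prod volume)) :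
    ∫ p in regionBetween f g s, w p ∂μ.prod volume =
      ∫ x in s, (∫ y in Ioo (f x) (g x), w (x, y)) ∂μ := by
  rw [← prod_volume_restrict_regionBetween,
    ← integral_indicator₀ (nullMeasurableSet_regionBetween_restrict hs hf hg),
    integral_prod _ (integrable_indicator_regionBetween hs hf hg hw)]
  exact setIntegral_congr_fun hs fun _ => integral_indicator_regionBetween_mk

theorem setIntegral_norm_sq_regionBetween_le {F : Type*} [NormedAddCommGroup F]
    [InnerProductSpace ℝ F] {u u' : α × ℝ → F} {d : ℝ} (hs : MeasurableSet s)
    (hf : AEMeasurable f (μ.restrict s)) (hg : AEMeasurable g (μ.restrict s))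
    (hfg : ∀ x ∈ s, f x ≤ g x) (hd : ∀ x ∈ s, g x - f x ≤ d)
    (hcont : ∀ x ∈ s, ContinuousOn (fun y => u (x, y)) (Icc (f x) (g x)))
    (hderiv : ∀ x ∈ s, ∀ y ∈ Ioo (f x) (g x),
      HasDerivWithinAt (fun t => u (x, t)) (u' (x, y)) (Ioi y) y)
    (hu : IntegrableOn (fun p => ‖u p‖ ^ 2) (regionBetween f g s) (μ.prod volume))
    (hu' : IntegrableOn (fun p => ‖u' p‖ ^ 2) (regionBetween f g s) (μ.prod volume))
    (htop : IntegrableOn (fun x => ‖u (x, g x)‖ ^ 2) s μ) :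
    ∫ p in regionBetween f g s, ‖u p‖ ^ 2 ∂μ.prod volume ≤
      4 * d ^ 2 * (∫ p in regionBetween f g s, ‖u' p‖ ^ 2 ∂μ.prod volume) +
        2 * d * ∫ x in s, ‖u (x, g x)‖ ^ 2 ∂μ := by
  have htop' := htop.const_mul (2 * d)
  have hu'' := (integrableOn_setIntegral_Ioo_of_regionBetween hs hf hg hu').const_mul (4 * d ^ 2)
  rw [setIntegral_regionBetween hs hf hg hu, setIntegral_regionBetween hs hf hg hu',
    ← integral_const_mul, ← integral_const_mul, ← integral_add hu'' htop']
  refine integral_mono_ae (integrableOn_setIntegral_Ioo_of_regionBetween hs hf hg hu)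
    (hu''.add htop') ?_
  filter_upwards [ae_integrableOn_Ioo_of_regionBetween hs hf hg hu', ae_restrict_mem hs]
    with x hx hxs
  have hnonneg : 0 ≤ g x - f x := sub_nonneg.mpr (hfg x hxs)
  have hle : g x - f x ≤ d := hd x hxs
  calc ∫ y in Ioo (f x) (g x), ‖u (x, y)‖ ^ 2
      ≤ 4 * (g x - f x) ^ 2 * (∫ y in Ioo (f x) (g x), ‖u' (x, y)‖ ^ 2) +
          2 * (g x - f x) * ‖u (x, g x)‖ ^ 2 :=
        setIntegral_norm_sq_Ioo_le (hfg x hxs) (hcont x hxs) (hderiv x hxs) hx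
    _ ≤ 4 * d ^ 2 * (∫ y in Ioo (f x) (g x), ‖u' (x, y)‖ ^ 2) +
          2 * d * ‖u (x, g x)‖ ^ 2 := by gcongr

end RegionBetween

lemma integrable_comp_of_continuousOn_isCompact {α X E : Type*} [MeasurableSpace α]
    {μ : Measure α} [IsFiniteMeasure μ] [TopologicalSpace X] [T2Space X] [MeasurableSpace X]
    [BorelSpace X] [NormedAddCommGroup E] {K : Set X} {f : X → E} {g : α → X}
    (hK : IsCompact K) (hf : ContinuousOn f K) (hg : AEMeasurable g μ)
    (hgK : ∀ᵐ x ∂μ, g x ∈ K) : Integrable (fun x => f (g x)) μ := by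
  have hmap : (μ.map g).restrict K = μ.map g :=
    Measure.restrict_eq_self_of_ae_mem ((ae_map_iff hg hK.measurableSet).mpr hgK)
  have hint : Integrable f (μ.map g) := hmap ▸ hf.integrableOn_compact hK
  exact hint.comp_aemeasurable hg

section PartialDerivatives

variable {φ : ℝ × ℝ → ℝ} {p : ℝ × ℝ} {U : Set (ℝ × ℝ)}

lemma hasDerivAt_pdy (hφ : DifferentiableAt ℝ φ p) :
    HasDerivAt (fun t => φ (p.1, t)) (pdy φ p) p.2 :=
  (DifferentiableAt.comp p.2 hφ (by fun_prop)).hasDerivAt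

lemma pdx_eq_fderiv (hφ : DifferentiableAt ℝ φ p) : pdx φ p = fderiv ℝ φ p (1, 0) :=
  (hφ.hasFDerivAt.comp_hasDerivAt p.1
    ((hasDerivAt_id p.1).prodMk (hasDerivAt_const p.1 p.2))).deriv

lemma pdy_eq_fderiv (hφ : DifferentiableAt ℝ φ p) : pdy φ p = fderiv ℝ φ p (0, 1) :=
  (hφ.hasFDerivAt.comp_hasDerivAt p.2
    ((hasDerivAt_const p.2 p.1).prodMk (hasDerivAt_id p.2))).deriv

lemma continuousOn_pdx (hU : IsOpen U) (hφ : ContDiffOn ℝ 1 φ U) : ContinuousOn (pdx φ) U :=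
  ((hφ.continuousOn_fderiv_of_isOpen hU le_rfl).clm_apply continuousOn_const).congr fun _ hp =>
    pdx_eq_fderiv ((hφ.differentiableOn one_ne_zero).differentiableAt (hU.mem_nhds hp))

lemma continuousOn_pdy (hU : IsOpen U) (hφ : ContDiffOn ℝ 1 φ U) : ContinuousOn (pdy φ) U :=
  ((hφ.continuousOn_fderiv_of_isOpen hU le_rfl).clm_apply continuousOn_const).congr fun _ hp =>
    pdy_eq_fderiv ((hφ.differentiableOn one_ne_zero).differentiableAt (hU.mem_nhds hp))

lemma continuousOn_gradSq (hU : IsOpen U) (hφ : ContDiffOn ℝ 1 φ U) :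
    ContinuousOn (gradSq φ) U :=
  ((continuousOn_pdx hU hφ).pow 2).add ((continuousOn_pdy hU hφ).pow 2)

lemma sq_pdy_le_gradSq (φ : ℝ × ℝ → ℝ) (p : ℝ × ℝ) : pdy φ p ^ 2 ≤ gradSq φ p :=
  le_add_of_nonneg_left (sq_nonneg _)

end PartialDerivatives

section Overlap

variable {xM d : ℝ} {ζ : ℝ → ℝ}

lemma ovl_eq_regionBetween (xM : ℝ) (ζ : ℝ → ℝ) :
    ovl xM ζ = regionBetween (fun _ => 0) ζ (Ioo 0 xM) := by
  ext p
  simp only [ovl, regionBetween, mem_Ioo, mem_ofPred_eq, and_assoc]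

lemma isCompact_closure_ovl (hζd : ∀ x ∈ Ioo 0 xM, ζ x ≤ d) : IsCompact (closure (ovl xM ζ)) := by
  refine (isCompact_Icc.prod isCompact_Icc : IsCompact (Icc 0 xM ×ˢ Icc 0 d)).closure_of_subset ?_
  rintro p ⟨hx₀, hxM, hy₀, hyζ⟩
  exact ⟨⟨hx₀.le, hxM.le⟩, hy₀.le, hyζ.le.trans (hζd _ ⟨hx₀, hxM⟩)⟩

lemma mk_mem_closure_ovl {x y : ℝ} (hx : x ∈ Ioo 0 xM) (hζ : 0 < ζ x) (hy : y ∈ Icc 0 (ζ x)) :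
    (x, y) ∈ closure (ovl xM ζ) :=
  ovl_eq_regionBetween xM ζ ▸ mk_mem_closure_regionBetween hx hζ hy

variable {E : Type*} [NormedAddCommGroup E] {w : ℝ × ℝ → E}

lemma integrableOn_ovl (hζd : ∀ x ∈ Ioo 0 xM, ζ x ≤ d)
    (hw : ContinuousOn w (closure (ovl xM ζ))) : IntegrableOn w (ovl xM ζ) :=
  (hw.integrableOn_compact (isCompact_closure_ovl hζd)).mono_set subset_closure

lemma integrableOn_comp_graph (hζ : AEMeasurable ζ (volume.restrict (Ioo 0 xM)))
    (hζd : ∀ x ∈ Ioo 0 xM, 0 < ζ x ∧ ζ x ≤ d) (hw : ContinuousOn w (closure (ovl xM ζ))) :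
    IntegrableOn (fun x => w (x, ζ x)) (Ioo 0 xM) := by
  refine integrable_comp_of_continuousOn_isCompact
    (isCompact_closure_ovl fun x hx => (hζd x hx).2) hw (aemeasurable_id.prodMk hζ) ?_
  filter_upwards [ae_restrict_mem measurableSet_Ioo] with x hx
  exact mk_mem_closure_ovl hx (hζd x hx).1 ⟨(hζd x hx).1.le, le_rfl⟩

theorem setIntegral_sq_ovl_le {U : Set (ℝ × ℝ)} {φ : ℝ × ℝ → ℝ}
    (hζ : AEMeasurable ζ (volume.restrict (Ioo 0 xM)))
    (hζd : ∀ x ∈ Ioo 0 xM, 0 < ζ x ∧ ζ x ≤ d)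
    (hU : IsOpen U) (hcl : closure (ovl xM ζ) ⊆ U) (hφ : ContDiffOn ℝ 1 φ U) :
    ∫ p in ovl xM ζ, φ p ^ 2 ≤
      4 * d ^ 2 * (∫ p in ovl xM ζ, pdy φ p ^ 2) + 2 * d * ∫ x in Ioo 0 xM, φ (x, ζ x) ^ 2 := by
  have hφ_cont : ContinuousOn φ (closure (ovl xM ζ)) := hφ.continuousOn.mono hcl
  have hpdy_cont : ContinuousOn (pdy φ) (closure (ovl xM ζ)) := (continuousOn_pdy hU hφ).mono hcl
  have hφ_int := integrableOn_ovl (fun x hx => (hζd x hx).2) (hφ_cont.norm.pow 2)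
  have hpdy_int := integrableOn_ovl (fun x hx => (hζd x hx).2) (hpdy_cont.norm.pow 2)
  have hsegment : ∀ x ∈ Ioo 0 xM, ∀ y ∈ Icc 0 (ζ x), (x, y) ∈ closure (ovl xM ζ) :=
    fun x hx _ => mk_mem_closure_ovl hx (hζd x hx).1
  rw [ovl_eq_regionBetween] at hφ_int hpdy_int
  have hregion := setIntegral_norm_sq_regionBetween_le measurableSet_Ioo aemeasurable_const hζ
    (fun x hx => (hζd x hx).1.le) (fun x hx => (sub_zero (ζ x)).trans_le (hζd x hx).2)
    (fun x hx => hφ_cont.comp (by fun_prop) (hsegment x hx))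
    (fun x hx y hy => (hasDerivAt_pdy ((hφ.differentiableOn one_ne_zero).differentiableAt
      (hU.mem_nhds (hcl (hsegment x hx y (Ioo_subset_Icc_self hy)))))).hasDerivWithinAt)
    hφ_int hpdy_int (integrableOn_comp_graph hζ hζd (hφ_cont.norm.pow 2))
  simpa only [← ovl_eq_regionBetween, ← Measure.volume_eq_prod, Real.norm_eq_abs, sq_abs]
    using hregion

end Overlap

theorem poincare_thin_overlap_general {xM h dO : ℝ} (hdO : 0 < dO) (hdh : dO ≤ h) {ζ : ℝ → ℝ}
    (hζ : AEMeasurable ζ (volume.restrict (Ioo 0 xM)))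
    (hζd : ∀ x ∈ Ioo 0 xM, 0 < ζ x ∧ ζ x ≤ dO)
    {U : Set (ℝ × ℝ)} (hU : IsOpen U) (hcl : closure (ovl xM ζ) ⊆ U)
    {φ : ℝ × ℝ → ℝ} (hφ : ContDiffOn ℝ 1 φ U) :
    ∫ p in ovl xM ζ, φ p ^ 2 ≤
      4 * dO * h * ((∫ p in ovl xM ζ, gradSq φ p) +
        1 / h * ∫ x in Ioo 0 xM, φ (x, ζ x) ^ 2) := by
  have hh : 0 < h := hdO.trans_le hdh
  have hpdy_int : IntegrableOn (fun p => pdy φ p ^ 2) (ovl xM ζ) :=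
    integrableOn_ovl (fun x hx => (hζd x hx).2) (((continuousOn_pdy hU hφ).mono hcl).pow 2)
  have hgrad_int : IntegrableOn (gradSq φ) (ovl xM ζ) :=
    integrableOn_ovl (fun x hx => (hζd x hx).2) ((continuousOn_gradSq hU hφ).mono hcl)
  have hpdy_le : ∫ p in ovl xM ζ, pdy φ p ^ 2 ≤ ∫ p in ovl xM ζ, gradSq φ p :=
    integral_mono hpdy_int hgrad_int (sq_pdy_le_gradSq φ)
  calc ∫ p in ovl xM ζ, φ p ^ 2
      ≤ 4 * dO ^ 2 * (∫ p in ovl xM ζ, pdy φ p ^ 2) +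
          2 * dO * ∫ x in Ioo 0 xM, φ (x, ζ x) ^ 2 := setIntegral_sq_ovl_le hζ hζd hU hcl hφ
    _ ≤ 4 * (dO * h) * (∫ p in ovl xM ζ, gradSq φ p) +
          4 * dO * ∫ x in Ioo 0 xM, φ (x, ζ x) ^ 2 := by
        rw [sq dO]
        gcongr
        norm_num
    _ = 4 * dO * h * ((∫ p in ovl xM ζ, gradSq φ p) +
          1 / h * ∫ x in Ioo 0 xM, φ (x, ζ x) ^ 2) := by
        field_simp

/-- Poincaré-type inequality on a thin overlap region,
Proposition 1 of the paper. There is a universal constant `c > 0` such that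
`∫_{Ω_o} φ² ≤ c d_o h ( ∫_{Ω_o} |∇φ|² + (1/h) ∫_0^{x_M} φ(x,ζ(x))² dx )`. -/
theorem poincare_thin_overlap :
    ∃ c : ℝ, 0 < c ∧
      ∀ (xM h dO : ℝ), 0 < xM → 0 < h → 0 < dO → dO ≤ h →
      ∀ ζ : ℝ → ℝ, ContinuousOn ζ (Icc 0 xM) →
        (∀ x ∈ Icc 0 xM, 0 < ζ x ∧ ζ x ≤ dO) →
      ∀ (U : Set (ℝ × ℝ)), IsOpen U → closure (ovl xM ζ) ⊆ U →
      ∀ φ : ℝ × ℝ → ℝ, ContDiffOn ℝ 1 φ U →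
        (∫ p in ovl xM ζ, (φ p) ^ 2) ≤
          c * dO * h * ((∫ p in ovl xM ζ, gradSq φ p) +
            (1 / h) * ∫ x in Ioo (0 : ℝ) xM, (φ (x, ζ x)) ^ 2) := by
  refine ⟨4, by norm_num, fun _ _ _ _ _ hd hdh _ hζ hζd _ hU hcl _ hφ => ?_⟩
  exact poincare_thin_overlap_general hd hdh
    ((hζ.mono Ioo_subset_Icc_self).aemeasurable measurableSet_Ioo)
    (fun x hx => hζd x (Ioo_subset_Icc_self hx)) hU hcl hφ
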